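/- Let ψ : I → ℂ be measurable and suppose there exist C, p > 0 such that |ψ(x)| ≤ C (sin(x/2))^p for all x ∈ I. Then the kernel K(x,y) = ψ(x)* K₂(x,y) ψ(y) defines a compact, self-adjoint integral operator on L²(I). -/

import Mathlib

open MeasureTheory Real Set Filter
open scoped Topology ENNReal ComplexConjugate

noncomputable section

/-- The fundamental periodic cell `I = [0, 2π)`. -/
def II : Set ℝ := Set.Ico 0 (2 * π)

/-- Lebesgue measure restricted to `I`. -/
def muI : Measure ℝ := volume.restrict II

/-- The dispersion relation `ω(x) = |sin(x/2)|`. -/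
def omg (x : ℝ) : ℝ := |Real.sin (x / 2)|

/-- `Ω(x,y,z) = ω(x) + ω(y) − ω(z) − ω(x+y−z)`. -/
def Omg (x y z : ℝ) : ℝ := omg x + omg y - omg z - omg (x + y - z)

/-- The representative of `x` modulo `2π` lying in `[0, 2π)`. -/
def mod2pi (x : ℝ) : ℝ := x - 2 * π * (⌊x / (2 * π)⌋ : ℝ)

/-- `h` on the fundamental cell: `h(x,z) = (z−x)/2 + 2 arcsin( tan(|z−x|/4) cos((x+z)/4) )`. -/
def h0 (x z : ℝ) : ℝ :=
  (z - x) / 2 + 2 * Real.arcsin (Real.tan (|z - x| / 4) * Real.cos ((x + z) / 4))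

/-- The extension of `h` to all of `ℝ²`: `h(x,z) = h(x mod 2π, z mod 2π) − (x − (x mod 2π))`. -/
def hFPU (x z : ℝ) : ℝ := h0 (mod2pi x) (mod2pi z) - (x - mod2pi x)

/-- `F₊(x,y) = (cos(x/2)+cos(y/2))² + 4 sin(x/2) sin(y/2)`. -/
def Fp (x y : ℝ) : ℝ :=
  (Real.cos (x / 2) + Real.cos (y / 2)) ^ 2 + 4 * Real.sin (x / 2) * Real.sin (y / 2)

/-- `F₋(x,y) = (cos(x/2)+cos(y/2))² − 4 sin(x/2) sin(y/2)`. -/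
def Fm (x y : ℝ) : ℝ :=
  (Real.cos (x / 2) + Real.cos (y / 2)) ^ 2 - 4 * Real.sin (x / 2) * Real.sin (y / 2)

/-- The kernel `K₁(x,y) = 4·𝟙(F₋(x,y) > 0)/√(F₋(x,y))`. -/
def K1 (x y : ℝ) : ℝ := if 0 < Fm x y then 4 / Real.sqrt (Fm x y) else 0

/-- The kernel `K₂(x,y) = 2/√(F₊(x,y))`. -/
def K2 (x y : ℝ) : ℝ := 2 / Real.sqrt (Fp x y)

/-- `V(x) = ∫_I K₂(x,y) dy`. -/
def VV (x : ℝ) : ℝ := ∫ y in II, K2 x y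

/-- `W(x) = sin²(x/2)·V(x)`. -/
def WW (x : ℝ) : ℝ := Real.sin (x / 2) ^ 2 * VV x


section HS

set_option linter.unusedSectionVars false

variable {α : Type*} [MeasurableSpace α] {μ : Measure α}

lemma eLpNorm_two_sq {β : Type*} [MeasurableSpace β] (ν : Measure β) (f : β → ℂ) :
    eLpNorm f 2 ν ^ 2 = ∫⁻ x, ‖f x‖ₑ ^ 2 ∂ν := by
  have := eLpNorm_nnreal_pow_eq_lintegral (μ := ν) (f := f) (p := 2) (by norm_num)
  simpa using this

lemma hs_cs (k f : α → ℂ) (hk : AEStronglyMeasurable k μ) (hf : AEStronglyMeasurable f μ) :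
    ‖∫ y, k y * f y ∂μ‖ₑ ^ 2 ≤ (∫⁻ y, ‖k y‖ₑ ^ 2 ∂μ) * ∫⁻ y, ‖f y‖ₑ ^ 2 ∂μ := by
  have h1 : ‖∫ y, k y * f y ∂μ‖ₑ ≤ ∫⁻ y, ‖k y‖ₑ * ‖f y‖ₑ ∂μ := by
    refine (enorm_integral_le_lintegral_enorm _).trans (le_of_eq ?_)
    simp [enorm_mul]
  have h2 := ENNReal.lintegral_mul_le_Lp_mul_Lq μ Real.HolderConjugate.two_two
    hk.enorm hf.enorm
  have h3 := h1.trans h2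
  have h4 := pow_le_pow_left' h3 2
  refine h4.trans (le_of_eq ?_)
  rw [mul_pow, ← ENNReal.rpow_natCast, ← ENNReal.rpow_natCast, ← ENNReal.rpow_mul,
    ← ENNReal.rpow_mul]
  simp

variable [IsFiniteMeasure μ]

lemma hs_fiber {K : α × α → ℂ} (hK : MemLp K 2 (μ.prod μ)) :
    ∀ᵐ x ∂μ, MemLp (fun y => K (x, y)) 2 μ := by
  have h1 := hK.1.prodMk_left
  have h2 : Integrable (fun z => ‖K z‖ ^ 2) (μ.prod μ) := hK.integrable_norm_pow (by norm_num)
  filter_upwards [h1, h2.prod_right_ae] with x hx hx2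
  exact (memLp_two_iff_integrable_sq_norm hx).2 hx2

lemma hs_int {K : α × α → ℂ} (hK : MemLp K 2 (μ.prod μ)) {f : α → ℂ} (hf : MemLp f 2 μ) :
    ∀ᵐ x ∂μ, Integrable (fun y => K (x, y) * f y) μ := by
  filter_upwards [hs_fiber hK] with x hx
  exact hx.integrable_mul hf

lemma hs_meas {K : α × α → ℂ} (hK : MemLp K 2 (μ.prod μ)) {f : α → ℂ} (hf : MemLp f 2 μ) :
    AEStronglyMeasurable (fun x => ∫ y, K (x, y) * f y ∂μ) μ :=
  (hK.1.mul hf.1.comp_snd).integral_prod_right'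

lemma hs_bound {K : α × α → ℂ} (hK : MemLp K 2 (μ.prod μ)) {f : α → ℂ} (hf : MemLp f 2 μ) :
    eLpNorm (fun x => ∫ y, K (x, y) * f y ∂μ) 2 μ ≤
      eLpNorm K 2 (μ.prod μ) * eLpNorm f 2 μ := by
  refine (ENNReal.pow_le_pow_left_iff two_ne_zero).1 ?_
  rw [mul_pow, eLpNorm_two_sq, eLpNorm_two_sq, eLpNorm_two_sq,
    lintegral_prod _ (hK.1.enorm.pow_const 2)]
  have hfin : (∫⁻ y, ‖f y‖ₑ ^ 2 ∂μ) ≠ ∞ := by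
    rw [← eLpNorm_two_sq]
    exact ENNReal.pow_ne_top hf.2.ne
  rw [← lintegral_mul_const' _ _ hfin]
  refine lintegral_mono_ae ?_
  filter_upwards [hs_fiber hK] with x hx
  exact hs_cs _ _ hx.1 hf.1

lemma hs_mem {K : α × α → ℂ} (hK : MemLp K 2 (μ.prod μ)) {f : α → ℂ} (hf : MemLp f 2 μ) :
    MemLp (fun x => ∫ y, K (x, y) * f y ∂μ) 2 μ :=
  ⟨hs_meas hK hf, (hs_bound hK hf).trans_lt (ENNReal.mul_lt_top hK.2 hf.2)⟩

/-- The operator `T` is the integral operator with kernel `K`. -/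
def IsKer (K : α × α → ℂ) (T : Lp ℂ 2 μ →L[ℂ] Lp ℂ 2 μ) : Prop :=
  ∀ f : Lp ℂ 2 μ, (T f : α → ℂ) =ᵐ[μ] fun x => ∫ y, K (x, y) * f y ∂μ

lemma hs_exists {K : α × α → ℂ} (hK : MemLp K 2 (μ.prod μ)) :
    ∃ T : Lp ℂ 2 μ →L[ℂ] Lp ℂ 2 μ, IsKer K T ∧ ‖T‖ ≤ (eLpNorm K 2 (μ.prod μ)).toReal := by
  let L : Lp ℂ 2 μ →ₗ[ℂ] Lp ℂ 2 μ :=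
    { toFun := fun f => (hs_mem hK (Lp.memLp f)).toLp _
      map_add' := by
        intro f g
        rw [← MemLp.toLp_add]
        refine (MemLp.toLp_eq_toLp_iff _ _).2 ?_
        filter_upwards [hs_int hK (Lp.memLp f), hs_int hK (Lp.memLp g)] with x h1 h2
        simp only [Pi.add_apply]
        rw [← integral_add h1 h2]
        refine integral_congr_ae ?_
        filter_upwards [Lp.coeFn_add f g] with y hy
        simp only [hy, Pi.add_apply]; ring
      map_smul' := by
        intro c f
        simp only [RingHom.id_apply]
        rw [← MemLp.toLp_const_smul]
        refine (MemLp.toLp_eq_toLp_iff _ _).2 ?_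
        refine Filter.Eventually.of_forall fun x => ?_
        simp only [Pi.smul_apply]
        rw [← integral_smul]
        refine integral_congr_ae ?_
        filter_upwards [Lp.coeFn_smul c f] with y hy
        simp only [hy, Pi.smul_apply, smul_eq_mul]; ring }
  refine ⟨L.mkContinuous (eLpNorm K 2 (μ.prod μ)).toReal ?_, ?_,
    L.mkContinuous_norm_le ENNReal.toReal_nonneg _⟩
  · intro f
    change ‖(hs_mem hK (Lp.memLp f)).toLp _‖ ≤ _
    rw [Lp.norm_toLp, Lp.norm_def, ← ENNReal.toReal_mul]
    exact ENNReal.toReal_mono (ENNReal.mul_ne_top hK.2.ne (Lp.memLp f).2.ne)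
      (hs_bound hK (Lp.memLp f))
  · intro f
    exact MemLp.coeFn_toLp (hs_mem hK (Lp.memLp f))

lemma IsKer.unique {K : α × α → ℂ} {T S : Lp ℂ 2 μ →L[ℂ] Lp ℂ 2 μ} (hT : IsKer K T)
    (hS : IsKer K S) : T = S := by
  ext1 f
  exact Lp.ext ((hT f).trans (hS f).symm)

lemma IsKer.congr {K K' : α × α → ℂ} {T : Lp ℂ 2 μ →L[ℂ] Lp ℂ 2 μ} (hT : IsKer K T)
    (h : K =ᵐ[μ.prod μ] K') : IsKer K' T := by
  intro f
  refine (hT f).trans ?_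
  filter_upwards [Measure.ae_ae_of_ae_prod h] with x hx
  refine integral_congr_ae ?_
  filter_upwards [hx] with y hy
  rw [hy]

lemma IsKer.add {K K' : α × α → ℂ} (hK : MemLp K 2 (μ.prod μ)) (hK' : MemLp K' 2 (μ.prod μ))
    {T T' : Lp ℂ 2 μ →L[ℂ] Lp ℂ 2 μ} (hT : IsKer K T) (hT' : IsKer K' T') :
    IsKer (K + K') (T + T') := by
  intro f
  rw [add_apply]
  filter_upwards [Lp.coeFn_add (T f) (T' f), hT f, hT' f, hs_int hK (Lp.memLp f),
    hs_int hK' (Lp.memLp f)] with x h1 h2 h3 h4 h5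
  rw [h1, Pi.add_apply, h2, h3, ← integral_add h4 h5]
  simp only [Pi.add_apply, add_mul]

lemma IsKer.smul {K : α × α → ℂ} (c : ℂ)
    {T : Lp ℂ 2 μ →L[ℂ] Lp ℂ 2 μ} (hT : IsKer K T) :
    IsKer (c • K) (c • T) := by
  intro f
  rw [smul_apply]
  filter_upwards [Lp.coeFn_smul c (T f), hT f] with x h1 h2
  rw [h1, Pi.smul_apply, h2, ← integral_smul]
  simp only [Pi.smul_apply, smul_eq_mul, mul_assoc]

/-- The integral operator attached to an `L²` kernel. -/
def hsOp (K : Lp ℂ 2 (μ.prod μ)) : Lp ℂ 2 μ →L[ℂ] Lp ℂ 2 μ :=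
  (hs_exists (Lp.memLp K)).choose

lemma hsOp_isKer (K : Lp ℂ 2 (μ.prod μ)) : IsKer K (hsOp K) :=
  (hs_exists (Lp.memLp K)).choose_spec.1

lemma hsOp_norm (K : Lp ℂ 2 (μ.prod μ)) : ‖hsOp K‖ ≤ 1 * ‖K‖ := by
  rw [one_mul, Lp.norm_def]
  exact (hs_exists (Lp.memLp K)).choose_spec.2

/-- The map sending a kernel to its integral operator. -/
def hsMap : Lp ℂ 2 (μ.prod μ) →L[ℂ] (Lp ℂ 2 μ →L[ℂ] Lp ℂ 2 μ) :=
  LinearMap.mkContinuous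
    { toFun := hsOp
      map_add' := fun K K' => (hsOp_isKer (K + K')).unique
        (((hsOp_isKer K).add (Lp.memLp K) (Lp.memLp K') (hsOp_isKer K')).congr
          (Lp.coeFn_add K K').symm)
      map_smul' := fun c K => (hsOp_isKer (c • K)).unique
        (((hsOp_isKer K).smul c).congr (Lp.coeFn_smul c K).symm) } 1 hsOp_norm

lemma hsMap_isKer (K : Lp ℂ 2 (μ.prod μ)) : IsKer K (hsMap K) := hsOp_isKer K

lemma hs_rect (c : ℂ) {A B : Set α} (hA : MeasurableSet A) (hB : MeasurableSet B) :
    IsCompactOperator (hsMap (indicatorConstLp 2 (hA.prod hB)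
      (measure_ne_top (μ.prod μ) _) c)) := by
  let u : Lp ℂ 2 μ := indicatorConstLp 2 hA (measure_ne_top μ _) c
  let v : Lp ℂ 2 μ := indicatorConstLp 2 hB (measure_ne_top μ _) 1
  let ℓ : Lp ℂ 2 μ →L[ℂ] ℂ := innerSL ℂ v
  let R : ℂ →L[ℂ] Lp ℂ 2 μ := ContinuousLinearMap.toSpanSingleton ℂ u
  have hcomp : IsCompactOperator (R ∘L ℓ) := by
    have h : IsCompactOperator (R : ℂ → Lp ℂ 2 μ) :=
      isCompactOperator_of_locallyCompactSpace_rng R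
    exact h.comp_clm ℓ
  have hker : IsKer ((A ×ˢ B).indicator fun _ => c) (R ∘L ℓ) := by
    intro f
    have e : (R ∘L ℓ) f = (∫ y in B, f y ∂μ) • u := by
      simp only [R, ℓ, v, ContinuousLinearMap.comp_apply,
        ContinuousLinearMap.toSpanSingleton_apply, innerSL_apply_apply]
      rw [L2.inner_indicatorConstLp_one]
    rw [e]
    filter_upwards [Lp.coeFn_smul (∫ y in B, f y ∂μ) u,
      indicatorConstLp_coeFn (p := 2) (hs := hA) (hμs := measure_ne_top μ A) (c := c)]
      with x h1 h2
    rw [h1, Pi.smul_apply, h2, ← integral_indicator hB]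
    by_cases hx : x ∈ A
    · simp only [hx, indicator_of_mem, smul_eq_mul, mul_comm _ c]
      rw [← integral_const_mul]
      congr 1 with y
      by_cases hy : y ∈ B <;> simp [hx, hy]
    · simp [hx]
  have : hsMap (indicatorConstLp 2 (hA.prod hB) (measure_ne_top (μ.prod μ) _) c) = R ∘L ℓ :=
    (hsMap_isKer _).unique (hker.congr indicatorConstLp_coeFn.symm)
  rw [this]
  exact hcomp

lemma hs_ind (c : ℂ) (s : Set (α × α)) (hs : MeasurableSet s) :
    IsCompactOperator (hsMap (indicatorConstLp 2 hs (measure_ne_top (μ.prod μ) _) c)) := by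
  induction s, hs using MeasurableSpace.induction_on_inter generateFrom_prod.symm
    isPiSystem_prod with
  | empty => simpa using isCompactOperator_zero
  | basic t ht =>
    obtain ⟨A, hA, B, hB, rfl⟩ := ht
    exact hs_rect c hA hB
  | compl t ht ih =>
    have hu := hs_rect (μ := μ) c (MeasurableSet.univ (α := α)) (MeasurableSet.univ (α := α))
    have e : indicatorConstLp 2 ht.compl (measure_ne_top (μ.prod μ) _) c =
        indicatorConstLp 2 (MeasurableSet.univ.prod MeasurableSet.univ)
          (measure_ne_top (μ.prod μ) _) c -
        indicatorConstLp 2 ht (measure_ne_top (μ.prod μ) _) c := by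
      rw [eq_sub_iff_add_eq, ← indicatorConstLp_disjoint_union _ _ _ _ disjoint_compl_left]
      congr 1
      simp
    rw [e, map_sub]
    exact hu.sub ih
  | iUnion f hd hm ih =>
    have hacc : ∀ n : ℕ, MeasurableSet (Set.accumulate f n) := fun n =>
      MeasurableSet.biUnion (Set.to_countable _) fun i _ => hm i
    have hpart : ∀ n : ℕ, IsCompactOperator (hsMap (indicatorConstLp 2
        (hacc n) (measure_ne_top (μ.prod μ) _) c)) := by
      intro n
      induction n with
      | zero =>
        have := ih 0
        convert! this using 4
        simp
      | succ n hn =>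
        have hdis : Disjoint (Set.accumulate f n) (f (n + 1)) :=
          Set.disjoint_accumulate hd (Nat.lt_succ_self n)
        have e : indicatorConstLp 2 (hacc (n + 1)) (measure_ne_top (μ.prod μ) _) c =
            indicatorConstLp 2 (hacc n) (measure_ne_top (μ.prod μ) _) c +
            indicatorConstLp 2 (hm (n + 1)) (measure_ne_top (μ.prod μ) _) c := by
          rw [← indicatorConstLp_disjoint_union _ _ _ _ hdis]
          congr 1
          exact Set.accumulate_succ f n
        rw [e, map_add]
        exact hn.add (ih (n + 1))
    have hlim : Tendsto (fun n => (μ.prod μ) (symmDiff (Set.accumulate f n) (⋃ i, f i))) atTop (𝓝 0) := by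
      have hsub : ∀ n, Set.accumulate f n ⊆ ⋃ i, f i := fun n =>
        Set.iUnion₂_subset fun i _ => Set.subset_iUnion f i
      have e : ∀ n, symmDiff (Set.accumulate f n) (⋃ i, f i) = (⋃ i, f i) \ Set.accumulate f n :=
        fun n => symmDiff_of_le (hsub n)
      simp_rw [e]
      have h := tendsto_measure_iInter_atTop (μ := μ.prod μ)
        (s := fun n => (⋃ i, f i) \ Set.accumulate f n)
        (fun n => ((MeasurableSet.iUnion hm).diff (hacc n)).nullMeasurableSet)
        (fun m n hmn => Set.sdiff_subset_sdiff_right (Set.monotone_accumulate hmn))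
        ⟨0, measure_ne_top _ _⟩
      have e2 : (⋂ n, (⋃ i, f i) \ Set.accumulate f n) = ∅ := by
        rw [← Set.sdiff_iUnion, Set.iUnion_accumulate, Set.sdiff_self]
      rwa [e2, measure_empty] at h
    have ht := tendsto_indicatorConstLp_set (p := 2) (μ := μ.prod μ) (c := c)
      (hs := MeasurableSet.iUnion hm) (hμs := measure_ne_top _ _) (l := atTop)
      (t := fun n => Set.accumulate f n)
      (ht := hacc)
      (hμt := fun n => measure_ne_top _ _) (by simp) hlim
    exact isCompactOperator_of_tendsto ((hsMap.continuous.tendsto _).comp ht)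
      (Filter.Eventually.of_forall hpart)

theorem hs_compact (K : Lp ℂ 2 (μ.prod μ)) : IsCompactOperator (hsMap K) := by
  induction K using Lp.induction (p := (2 : ℝ≥0∞)) ENNReal.ofNat_ne_top with
  | indicatorConst c hs hμs => 
    exact hs_ind c _ hs
  | add hf hg hd h1 h2 => 
    rw [map_add]
    exact h1.add h2
  | isClosed => exact isClosed_setOfPred_isCompactOperator.preimage hsMap.continuous

lemma hs_selfadj {K : α × α → ℂ} (hK : MemLp K 2 (μ.prod μ))
    (hsym : ∀ x y, conj (K (x, y)) = K (y, x)) {T : Lp ℂ 2 μ →L[ℂ] Lp ℂ 2 μ}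
    (hT : IsKer K T) : IsSelfAdjoint T := by
  rw [ContinuousLinearMap.isSelfAdjoint_iff_isSymmetric]
  intro f g
  simp only [ContinuousLinearMap.coe_coe]
  rw [L2.inner_def, L2.inner_def]
  have e1 : ∫ x, inner ℂ (T f x) (g x) ∂μ =
      ∫ x, ∫ y, conj (K (x, y)) * conj (f y) * g x ∂μ ∂μ := by
    refine integral_congr_ae ?_
    filter_upwards [hT f] with x hx
    rw [hx, RCLike.inner_apply, ← integral_conj, ← integral_const_mul]
    congr 1 with y
    rw [map_mul]; ring
  have e2 : ∫ x, inner ℂ (f x) (T g x) ∂μ =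
      ∫ x, ∫ y, conj (K (y, x)) * conj (f x) * g y ∂μ ∂μ := by
    refine integral_congr_ae ?_
    filter_upwards [hT g] with x hx
    rw [hx, RCLike.inner_apply, ← integral_mul_const]
    congr 1 with y
    rw [hsym y x]; ring
  rw [e1, e2]
  refine integral_integral_swap (f := fun x y => conj (K (x, y)) * conj (f y) * g x) ?_
  have hfg : MemLp (fun z : α × α => conj (f z.2) * g z.1) 2 (μ.prod μ) := by
    have hm : AEStronglyMeasurable (fun z : α × α => conj (f z.2) * g z.1) (μ.prod μ) :=
      (Complex.continuous_conj.comp_aestronglyMeasurable (Lp.memLp f).1.comp_snd).mul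
        (Lp.memLp g).1.comp_fst
    refine (memLp_two_iff_integrable_sq_norm hm).2 ?_
    have := ((Lp.memLp g).integrable_norm_pow (by norm_num)).mul_prod
      ((Lp.memLp f).integrable_norm_pow (by norm_num))
    refine this.congr (Filter.Eventually.of_forall fun z => ?_)
    simp [mul_pow, mul_comm]
  have hKc : MemLp (fun z : α × α => conj (K z)) 2 (μ.prod μ) :=
    hK.of_le (Complex.continuous_conj.comp_aestronglyMeasurable hK.1)
      (Filter.Eventually.of_forall fun z => by simp)
  refine (hKc.integrable_mul hfg).congr (Filter.Eventually.of_forall fun z => ?_)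
  simp [Function.uncurry, mul_assoc]

theorem hs_main {K : α × α → ℂ} (hK : MemLp K 2 (μ.prod μ))
    (hsym : ∀ x y, conj (K (x, y)) = K (y, x)) :
    ∃ T : Lp ℂ 2 μ →L[ℂ] Lp ℂ 2 μ, IsCompactOperator T ∧ IsSelfAdjoint T ∧ IsKer K T := by
  have h : IsKer K (hsMap (hK.toLp K)) := (hsMap_isKer _).congr hK.coeFn_toLp
  exact ⟨_, hs_compact _, hs_selfadj hK hsym h, h⟩

end HS


instance : IsFiniteMeasure muI := by
  unfold muI II
  infer_instance

lemma sin_half_nonneg {x : ℝ} (hx : x ∈ II) : 0 ≤ Real.sin (x / 2) :=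
  Real.sin_nonneg_of_nonneg_of_le_pi (by linarith [hx.1]) (by linarith [hx.2])

lemma sin_rpow_int {q : ℝ} (hq : -1 < q) :
    Integrable (fun x => Real.sin (x / 2) ^ q) muI := by
  have hm : AEStronglyMeasurable (fun x : ℝ => Real.sin (x / 2) ^ q) muI := by
    apply Measurable.aestronglyMeasurable
    fun_prop
  have i1 : Integrable (fun x : ℝ => x ^ q) muI := by
    have := (intervalIntegral.intervalIntegrable_rpow' hq (a := 0) (b := 2 * π))
    rw [intervalIntegrable_iff_integrableOn_Ico_of_le (by positivity)] at this
    exact this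
  have i2 : Integrable (fun x : ℝ => (2 * π - x) ^ q) muI := by
    have := (intervalIntegral.intervalIntegrable_rpow' hq (a := 0) (b := 2 * π)).comp_sub_left
      (2 * π)
    simp only [sub_zero, sub_self] at this
    have := this.symm
    rw [intervalIntegrable_iff_integrableOn_Ico_of_le (by positivity)] at this
    exact this
  have i3 := ((integrable_const (1 : ℝ)).add (i1.const_mul ((1 / π) ^ q))).add
    (i2.const_mul ((1 / π) ^ q))
  refine i3.mono' hm ?_
  have h0 : ∀ᵐ x ∂muI, x ≠ 0 := by
    unfold muI
    exact ae_restrict_of_ae (Measure.ae_ne volume 0)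
  have hI : ∀ᵐ x ∂muI, x ∈ II := ae_restrict_mem measurableSet_Ico
  filter_upwards [h0, hI] with x hx0 hx
  have hxpos : 0 < x := lt_of_le_of_ne hx.1 (Ne.symm hx0)
  have hxlt : 0 < 2 * π - x := by linarith [hx.2]
  have hs : 0 < Real.sin (x / 2) := Real.sin_pos_of_pos_of_lt_pi (by linarith) (by linarith)
  have hpi := Real.pi_pos
  rw [Real.norm_of_nonneg (Real.rpow_nonneg hs.le q)]
  simp only [Pi.add_apply]
  have p1 : 0 ≤ (1 / π) ^ q * x ^ q := by positivity
  have p2 : 0 ≤ (1 / π) ^ q * (2 * π - x) ^ q := by positivity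
  rcases le_total 0 q with h | h
  · have := Real.rpow_le_one hs.le (Real.sin_le_one _) h
    linarith
  · rcases le_total x π with hxp | hxp
    · have h1 : 1 / π * x ≤ Real.sin (x / 2) := by
        have := Real.mul_le_sin (x := x / 2) (by linarith) (by linarith)
        convert this using 1; ring
      have := Real.rpow_le_rpow_of_nonpos (by positivity) h1 h
      rw [Real.mul_rpow (by positivity) hxpos.le] at this
      linarith
    · have h1 : 1 / π * (2 * π - x) ≤ Real.sin (x / 2) := by
        have := Real.mul_le_sin (x := π - x / 2) (by linarith) (by linarith)
        rw [Real.sin_pi_sub] at this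
        convert this using 1; ring
      have := Real.rpow_le_rpow_of_nonpos (by positivity) h1 h
      rw [Real.mul_rpow (by positivity) hxlt.le] at this
      linarith

lemma K2_symm (x y : ℝ) : K2 x y = K2 y x := by
  unfold K2 Fp
  congr 2
  ring

lemma K2_meas : Measurable (fun z : ℝ × ℝ => K2 z.1 z.2) := by
  unfold K2 Fp
  fun_prop

lemma K2_sq_le {x y : ℝ} (hx : 0 < Real.sin (x / 2)) (hy : 0 < Real.sin (y / 2)) :
    K2 x y ^ 2 ≤ (Real.sin (x / 2))⁻¹ * (Real.sin (y / 2))⁻¹ := by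
  have h : 4 * Real.sin (x / 2) * Real.sin (y / 2) ≤ Fp x y := by
    unfold Fp
    nlinarith [sq_nonneg (Real.cos (x / 2) + Real.cos (y / 2))]
  have hpos : 0 < 4 * Real.sin (x / 2) * Real.sin (y / 2) := by positivity
  unfold K2
  rw [div_pow, Real.sq_sqrt (hpos.le.trans h), ← mul_inv, div_le_iff₀ (hpos.trans_le h),
    ← div_eq_inv_mul, le_div_iff₀ (by positivity)]
  linarith

lemma ker_memLp (ψ : ℝ → ℂ) (hmeas : Measurable ψ) (C p : ℝ) (hC : 0 < C) (hp : 0 < p)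
    (hbound : ∀ x ∈ II, ‖ψ x‖ ≤ C * Real.sin (x / 2) ^ p) :
    MemLp (fun z : ℝ × ℝ => (starRingEnd ℂ) (ψ z.1) * (K2 z.1 z.2 : ℝ) * ψ z.2) 2
      (muI.prod muI) := by
  have hm : Measurable
      (fun z : ℝ × ℝ => (starRingEnd ℂ) (ψ z.1) * (K2 z.1 z.2 : ℝ) * ψ z.2) := by
    have h1 : Measurable fun z : ℝ × ℝ => (starRingEnd ℂ) (ψ z.1) :=
      Complex.continuous_conj.measurable.comp (hmeas.comp measurable_fst)
    exact (h1.mul (Complex.measurable_ofReal.comp K2_meas)).mul (hmeas.comp measurable_snd)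
  refine (memLp_two_iff_integrable_sq_norm hm.aestronglyMeasurable).2 ?_
  have i1 := sin_rpow_int (q := 2 * p - 1) (by linarith)
  have i2 := (i1.mul_prod i1).const_mul (C ^ 4)
  refine i2.mono' (hm.norm.pow_const 2).aestronglyMeasurable ?_
  have h0 : ∀ᵐ x ∂muI, x ∈ II ∧ 0 < Real.sin (x / 2) := by
    have h0 : ∀ᵐ x ∂muI, x ≠ 0 := by
      unfold muI
      exact ae_restrict_of_ae (Measure.ae_ne volume 0)
    have hI : ∀ᵐ x ∂muI, x ∈ II := ae_restrict_mem measurableSet_Ico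
    filter_upwards [h0, hI] with x hx0 hx
    have hxpos : 0 < x := lt_of_le_of_ne hx.1 (Ne.symm hx0)
    exact ⟨hx, Real.sin_pos_of_pos_of_lt_pi (by linarith) (by linarith [hx.2])⟩
  have e : ∀ s : ℝ, 0 < s → s ^ (2 * p - 1) = (s ^ p) ^ 2 * s⁻¹ := by
    intro s hs
    rw [Real.rpow_sub hs, Real.rpow_one, mul_comm 2 p, Real.rpow_mul hs.le]
    simp [div_eq_mul_inv]
  filter_upwards [Measure.quasiMeasurePreserving_fst.ae h0,
    Measure.quasiMeasurePreserving_snd.ae h0] with z hz1 hz2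
  rw [Real.norm_of_nonneg (by positivity), e _ hz1.2, e _ hz2.2]
  rw [norm_mul, norm_mul, RCLike.norm_conj, Complex.norm_real, mul_pow, mul_pow,
    Real.norm_eq_abs, sq_abs]
  have a1 := pow_le_pow_left₀ (norm_nonneg _) (hbound _ hz1.1) 2
  have a2 := pow_le_pow_left₀ (norm_nonneg _) (hbound _ hz2.1) 2
  have a3 := K2_sq_le hz1.2 hz2.2
  calc ‖ψ z.1‖ ^ 2 * K2 z.1 z.2 ^ 2 * ‖ψ z.2‖ ^ 2
      ≤ (C * Real.sin (z.1 / 2) ^ p) ^ 2 * ((Real.sin (z.1 / 2))⁻¹ * (Real.sin (z.2 / 2))⁻¹)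
        * (C * Real.sin (z.2 / 2) ^ p) ^ 2 := by
        have b1 := hz1.2
        have b2 := hz2.2
        gcongr
    _ = _ := by ring

/-- **Proposition 4.3.**  If `ψ` is measurable with `|ψ(x)| ≤ C sin(x/2)^p` on `I` for some
`C, p > 0`, then the kernel `K(x,y) = ψ(x)* K₂(x,y) ψ(y)` defines a compact self-adjoint
integral operator on `L²(I)`. -/
theorem K2_kernel_compact
    (ψ : ℝ → ℂ) (hmeas : Measurable ψ) (C p : ℝ) (hC : 0 < C) (hp : 0 < p)
    (hbound : ∀ x ∈ II, ‖ψ x‖ ≤ C * Real.sin (x / 2) ^ p) :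
    ∃ T : Lp ℂ 2 muI →L[ℂ] Lp ℂ 2 muI,
      IsCompactOperator T ∧ IsSelfAdjoint T ∧
      ∀ f : Lp ℂ 2 muI,
        (T f : ℝ → ℂ) =ᵐ[muI]
          fun x => ∫ y in II, (starRingEnd ℂ) (ψ x) * (K2 x y : ℝ) * ψ y * f y := by
  obtain ⟨T, h1, h2, h3⟩ := hs_main (ker_memLp ψ hmeas C p hC hp hbound) (by
    intro x y
    simp only [map_mul, Complex.conj_conj, Complex.conj_ofReal]
    rw [K2_symm x y]
    ring)
  exact ⟨T, h1, h2, h3⟩
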